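/- Assume in addition that Z₀ and Z₁ each have the same distribution as Z and that (W₀, Z₀) and (W₁, Z₁) have the same joint distribution. Let q > 1 be such that 0 < E(Z^q) < ∞. Then q ∈ I_ν (that is, ∫_{|x|≥1} e^{qx} ν(dx) < ∞) and φ(q) < 0. -/

import Mathlib

open MeasureTheory ProbabilityTheory Filter

/-- `I_ν = {q : ∫_{|x|≥1} e^{qx} ν(dx) < ∞}`. -/
noncomputable def Inu (ν : Measure ℝ) : Set ℝ :=
  {q : ℝ | ∫⁻ x in {x : ℝ | 1 ≤ |x|}, ENNReal.ofReal (Real.exp (q * x)) ∂ν < ⊤}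

/-- The normalizing drift `a = −σ²/2 − ∫ (e^x − 1 − x 1_{|x|≤1}) ν(dx)`. -/
noncomputable def levyA (σ : ℝ) (ν : Measure ℝ) : ℝ :=
  -σ ^ 2 / 2 - ∫ x, (Real.exp x - 1 - if |x| ≤ 1 then x else 0) ∂ν

/-- `ψ̃(q) = a q + σ² q²/2 + ∫ (e^{qx} − 1 − q x 1_{|x|≤1}) ν(dx)`. -/
noncomputable def psiT (σ : ℝ) (ν : Measure ℝ) (q : ℝ) : ℝ :=
  levyA σ ν * q + σ ^ 2 * q ^ 2 / 2 +
    ∫ x, (Real.exp (q * x) - 1 - q * (if |x| ≤ 1 then x else 0)) ∂ν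

/-- `φ(q) = ψ̃(q) − (q − 1)`. -/
noncomputable def phiF (σ : ℝ) (ν : Measure ℝ) (q : ℝ) : ℝ := psiT σ ν q - (q - 1)

/-!
For `q ≥ 1` the map `x ↦ x ^ q` is superadditive on `[0, ∞)`, so taking `q`-th moments in
`b Z = ∑ i, W i * Z' i` gives `∑ i, E (W i ^ q) ≤ b ^ q`, that is `q ∈ I_ν` and `φ q ≤ 0`.
If `φ q = 0`, superadditivity is almost surely an equality, so at most one of the products
`W i * Z' i` is nonzero. The moments of every order `r ∈ [1, q]` are then additive as well, which
gives `φ r = 0` on all of `[1, q]` and contradicts the strict convexity of `φ`.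
-/

open scoped ENNReal

section RealPowers

variable {x s q : ℝ}

lemma self_mul_rpow_sub_one (hx : 0 ≤ x) (hq : q ≠ 0) : x * x ^ (q - 1) = x ^ q := by
  rw [← Real.rpow_one_add' hx (by simpa using hq), add_sub_cancel]

lemma rpow_le_self_mul_rpow_sub_one (hx : 0 ≤ x) (hxs : x ≤ s) (hq : 1 ≤ q) :
    x ^ q ≤ x * s ^ (q - 1) := by
  rw [← self_mul_rpow_sub_one hx (by positivity)]
  gcongr

lemma eq_zero_or_eq_of_rpow_eq_self_mul_rpow_sub_one (hx : 0 ≤ x) (hxs : x ≤ s) (hq : 1 < q)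
    (h : x ^ q = x * s ^ (q - 1)) : x = 0 ∨ x = s := by
  rw [← self_mul_rpow_sub_one hx (by positivity)] at h
  refine (mul_eq_mul_left_iff.mp h).symm.imp_right fun hpow => ?_
  exact (Real.rpow_left_inj hx (hx.trans hxs) (sub_pos.mpr hq).ne').mp hpow

lemma rpow_le_one_add_rpow {r : ℝ} (hx : 0 ≤ x) (hr : 0 ≤ r) (hrq : r ≤ q) :
    x ^ r ≤ 1 + x ^ q := by
  rcases le_total x 1 with hx1 | hx1
  · exact (Real.rpow_le_one hx hx1 hr).trans (le_add_of_nonneg_right (Real.rpow_nonneg hx q))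
  · exact (Real.rpow_le_rpow_of_exponent_le hx1 hrq).trans (le_add_of_nonneg_left zero_le_one)

variable {ι : Type*} {I : Finset ι} {y : ι → ℝ} {r : ℝ}

lemma sum_mul_rpow_sub_one_sum (hy : ∀ i ∈ I, 0 ≤ y i) (hr : r ≠ 0) :
    ∑ i ∈ I, y i * (∑ j ∈ I, y j) ^ (r - 1) = (∑ i ∈ I, y i) ^ r := by
  rw [← Finset.sum_mul, self_mul_rpow_sub_one (Finset.sum_nonneg hy) hr]

lemma sum_rpow_le_rpow_sum (hy : ∀ i ∈ I, 0 ≤ y i) (hq : 1 ≤ q) :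
    ∑ i ∈ I, y i ^ q ≤ (∑ i ∈ I, y i) ^ q := by
  rw [← sum_mul_rpow_sub_one_sum hy (by positivity)]
  exact Finset.sum_le_sum fun i hi =>
    rpow_le_self_mul_rpow_sub_one (hy i hi) (Finset.single_le_sum hy hi) hq

lemma eq_zero_or_eq_sum_of_sum_rpow_eq_rpow_sum (hy : ∀ i ∈ I, 0 ≤ y i) (hq : 1 < q)
    (h : ∑ i ∈ I, y i ^ q = (∑ i ∈ I, y i) ^ q) {i : ι} (hi : i ∈ I) :
    y i = 0 ∨ y i = ∑ j ∈ I, y j := by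
  have hle : ∀ j ∈ I, y j ≤ ∑ k ∈ I, y k := fun j hj => Finset.single_le_sum hy hj
  rw [← sum_mul_rpow_sub_one_sum hy (by positivity), Finset.sum_eq_sum_iff_of_le fun j hj =>
    rpow_le_self_mul_rpow_sub_one (hy j hj) (hle j hj) hq.le] at h
  exact eq_zero_or_eq_of_rpow_eq_self_mul_rpow_sub_one (hy i hi) (hle i hi) hq (h i hi)

lemma sum_rpow_eq_rpow_sum_of_eq (hy : ∀ i ∈ I, 0 ≤ y i) (hq : 1 < q)
    (h : ∑ i ∈ I, y i ^ q = (∑ i ∈ I, y i) ^ q) (hr : r ≠ 0) :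
    ∑ i ∈ I, y i ^ r = (∑ i ∈ I, y i) ^ r := by
  rw [← sum_mul_rpow_sub_one_sum hy hr]
  refine Finset.sum_congr rfl fun i hi => ?_
  rcases eq_zero_or_eq_sum_of_sum_rpow_eq_rpow_sum hy hq h hi with h0 | hsum
  · rw [h0, Real.zero_rpow hr, zero_mul]
  · rw [← hsum, self_mul_rpow_sub_one (hy i hi) hr]

end RealPowers

section Moments

variable {Ω : Type*} [MeasurableSpace Ω] {μ : Measure Ω} {X Y : Ω → ℝ} {q r : ℝ}

/-- The moment `E (X ^ r)` of real order `r` of a nonnegative random variable `X`, as an extended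
nonnegative number so that infinite moments are recorded as `∞`. -/
noncomputable def rpowMoment (X : Ω → ℝ) (r : ℝ) (μ : Measure Ω) : ℝ≥0∞ :=
  ∫⁻ ω, ENNReal.ofReal (X ω ^ r) ∂μ

lemma measurable_ofReal_rpow (r : ℝ) : Measurable fun x : ℝ => ENNReal.ofReal (x ^ r) := by
  fun_prop

lemma rpowMoment_congr_identDistrib {Ω' : Type*} [MeasurableSpace Ω'] {μ' : Measure Ω'}
    {X' : Ω' → ℝ} (h : IdentDistrib X X' μ μ') : rpowMoment X r μ = rpowMoment X' r μ' :=
  (h.comp (measurable_ofReal_rpow r)).lintegral_eq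

lemma rpowMoment_congr_ae (h : X =ᵐ[μ] Y) : rpowMoment X r μ = rpowMoment Y r μ :=
  lintegral_congr_ae <| h.mono fun _ hω => by simp only [hω]

lemma rpowMoment_const_mul {c : ℝ} (hc : 0 ≤ c) (hX : 0 ≤ᵐ[μ] X) :
    rpowMoment (fun ω => c * X ω) r μ = ENNReal.ofReal (c ^ r) * rpowMoment X r μ := by
  rw [rpowMoment, rpowMoment, ← lintegral_const_mul' _ _ ENNReal.ofReal_ne_top]
  refine lintegral_congr_ae (hX.mono fun ω hω => ?_)
  simp only [Real.mul_rpow hc hω, ENNReal.ofReal_mul (Real.rpow_nonneg hc r)]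

lemma rpowMoment_mul_of_indepFun (hXm : AEMeasurable X μ) (hYm : AEMeasurable Y μ)
    (hX : 0 ≤ᵐ[μ] X) (hY : 0 ≤ᵐ[μ] Y) (h : IndepFun X Y μ) :
    rpowMoment (fun ω => X ω * Y ω) r μ = rpowMoment X r μ * rpowMoment Y r μ := by
  have hm := measurable_ofReal_rpow r
  refine Eq.trans (lintegral_congr_ae ?_) <| lintegral_mul_eq_lintegral_mul_lintegral_of_indepFun'
    (hm.comp_aemeasurable hXm) (hm.comp_aemeasurable hYm) (h.comp hm hm)
  filter_upwards [hX, hY] with ω hXω hYω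
  simp only [Real.mul_rpow hXω hYω, ENNReal.ofReal_mul (Real.rpow_nonneg hXω r), Pi.mul_apply]

lemma rpowMoment_ne_zero_of_ne_zero (hXm : AEMeasurable X μ) (hX : 0 ≤ᵐ[μ] X) (hq : q ≠ 0)
    (h : rpowMoment X q μ ≠ 0) : rpowMoment X r μ ≠ 0 := by
  contrapose! h
  rw [rpowMoment, lintegral_eq_zero_iff' (hXm.pow_const r).ennreal_ofReal] at h
  refine lintegral_eq_zero_of_ae_eq_zero ?_
  filter_upwards [h, hX] with ω hω hXω
  have hpow : X ω ^ r = 0 :=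
    (ENNReal.ofReal_eq_zero.mp hω).antisymm (Real.rpow_nonneg hXω r)
  have hzero : X ω = 0 := ((Real.rpow_eq_zero_iff_of_nonneg hXω).mp hpow).1
  simp only [hzero, Real.zero_rpow hq, ENNReal.ofReal_zero, Pi.zero_apply]

lemma rpowMoment_ne_top_of_le [IsFiniteMeasure μ] (hX : 0 ≤ᵐ[μ] X) (hr : 0 ≤ r) (hrq : r ≤ q)
    (h : rpowMoment X q μ ≠ ∞) : rpowMoment X r μ ≠ ∞ := by
  have hle : rpowMoment X r μ ≤ ∫⁻ ω, (1 + ENNReal.ofReal (X ω ^ q)) ∂μ := by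
    refine lintegral_mono_ae (hX.mono fun ω hω => ?_)
    rw [← ENNReal.ofReal_one, ← ENNReal.ofReal_add zero_le_one (Real.rpow_nonneg hω q)]
    exact ENNReal.ofReal_le_ofReal (rpow_le_one_add_rpow hω hr hrq)
  refine ne_top_of_le_ne_top ?_ hle
  rw [lintegral_add_left measurable_const, lintegral_one]
  exact ENNReal.add_ne_top.mpr ⟨measure_ne_top μ _, h⟩

variable {ι : Type*} {I : Finset ι} {V : ι → Ω → ℝ}

lemma sum_rpowMoment_eq_lintegral (hVm : ∀ i ∈ I, AEMeasurable (V i) μ)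
    (hV : ∀ᵐ ω ∂μ, ∀ i ∈ I, 0 ≤ V i ω) :
    ∑ i ∈ I, rpowMoment (V i) r μ = ∫⁻ ω, ENNReal.ofReal (∑ i ∈ I, V i ω ^ r) ∂μ := by
  simp only [rpowMoment]
  rw [← lintegral_finsetSum' I fun i hi => ((hVm i hi).pow_const r).ennreal_ofReal]
  refine lintegral_congr_ae (hV.mono fun ω hω => ?_)
  exact (ENNReal.ofReal_sum_of_nonneg fun i hi => Real.rpow_nonneg (hω i hi) r).symm

lemma sum_rpowMoment_le_rpowMoment_sum (hVm : ∀ i ∈ I, AEMeasurable (V i) μ)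
    (hV : ∀ᵐ ω ∂μ, ∀ i ∈ I, 0 ≤ V i ω) (hq : 1 ≤ q) :
    ∑ i ∈ I, rpowMoment (V i) q μ ≤ rpowMoment (fun ω => ∑ i ∈ I, V i ω) q μ := by
  rw [sum_rpowMoment_eq_lintegral hVm hV]
  exact lintegral_mono_ae <| hV.mono fun ω hω =>
    ENNReal.ofReal_le_ofReal (sum_rpow_le_rpow_sum hω hq)

lemma sum_rpowMoment_eq_rpowMoment_sum_of_eq (hVm : ∀ i ∈ I, AEMeasurable (V i) μ)
    (hV : ∀ᵐ ω ∂μ, ∀ i ∈ I, 0 ≤ V i ω) (hq : 1 < q)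
    (hfin : rpowMoment (fun ω => ∑ i ∈ I, V i ω) q μ ≠ ∞)
    (h : ∑ i ∈ I, rpowMoment (V i) q μ = rpowMoment (fun ω => ∑ i ∈ I, V i ω) q μ) (hr : r ≠ 0) :
    ∑ i ∈ I, rpowMoment (V i) r μ = rpowMoment (fun ω => ∑ i ∈ I, V i ω) r μ := by
  have hae : (fun ω => ENNReal.ofReal (∑ i ∈ I, V i ω ^ q)) =ᵐ[μ]
      fun ω => ENNReal.ofReal ((∑ i ∈ I, V i ω) ^ q) := by
    rw [← h, sum_rpowMoment_eq_lintegral hVm hV] at hfin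
    rw [sum_rpowMoment_eq_lintegral hVm hV] at h
    refine ae_eq_of_ae_le_of_lintegral_le ?_ hfin ?_ h.ge
    · exact hV.mono fun ω hω => ENNReal.ofReal_le_ofReal (sum_rpow_le_rpow_sum hω hq.le)
    · exact ((Finset.aemeasurable_fun_sum I hVm).pow_const q).ennreal_ofReal
  rw [sum_rpowMoment_eq_lintegral hVm hV]
  refine lintegral_congr_ae ?_
  filter_upwards [hae, hV] with ω hω hVω
  have hpow : ∑ i ∈ I, V i ω ^ q = (∑ i ∈ I, V i ω) ^ q :=
    (ENNReal.ofReal_eq_ofReal_iff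
      (Finset.sum_nonneg fun i hi => Real.rpow_nonneg (hVω i hi) q)
      (Real.rpow_nonneg (Finset.sum_nonneg hVω) q)).mp hω
  rw [sum_rpow_eq_rpow_sum_of_eq hVω hq hpow hr]

lemma sum_rpowMoment_of_forall_eq_card_rpow [Fintype ι] [Nonempty ι] {s : ℝ}
    (hs : ∀ i, rpowMoment (V i) r μ = ENNReal.ofReal ((Fintype.card ι : ℝ) ^ s)) :
    ∑ i, rpowMoment (V i) r μ = ENNReal.ofReal ((Fintype.card ι : ℝ) ^ (s + 1)) := by
  simp only [hs]
  rw [Finset.sum_const, Finset.card_univ, nsmul_eq_mul,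
    Real.rpow_add_one (by exact_mod_cast Fintype.card_ne_zero), mul_comm,
    ENNReal.ofReal_mul (by positivity), ENNReal.ofReal_natCast]

end Moments

section SmoothingEquation

variable {Ω ι : Type*} [MeasurableSpace Ω] [Fintype ι]

/-- `Z` solves the smoothing equation `c Z = ∑ i, W i * Z' i` almost surely, where the `W i` are
nonnegative weights, each `Z' i` is a copy of `Z ≥ 0`, and `W i` is independent of `Z' i`. Nothing
is assumed on the joint law of different indices. -/
structure IsSmoothingSolution (c : ℝ) (W Z' : ι → Ω → ℝ) (Z : Ω → ℝ) (μ : Measure Ω) : Prop where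
  aemeasurable_weight (i : ι) : AEMeasurable (W i) μ
  weight_nonneg (i : ι) : 0 ≤ᵐ[μ] W i
  nonneg : 0 ≤ᵐ[μ] Z
  identDistrib (i : ι) : IdentDistrib (Z' i) Z μ μ
  indepFun (i : ι) : IndepFun (W i) (Z' i) μ
  mul_eq_sum : ∀ᵐ ω ∂μ, c * Z ω = ∑ i, W i ω * Z' i ω

namespace IsSmoothingSolution

variable {μ : Measure Ω} {c : ℝ} {W Z' : ι → Ω → ℝ} {Z : Ω → ℝ} {q r : ℝ}

lemma copy_nonneg (h : IsSmoothingSolution c W Z' Z μ) (i : ι) : 0 ≤ᵐ[μ] Z' i :=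
  (h.identDistrib i).symm.ae_mem_snd measurableSet_Ici h.nonneg

lemma aemeasurable_weight_mul_copy (h : IsSmoothingSolution c W Z' Z μ) (i : ι) :
    AEMeasurable (fun ω => W i ω * Z' i ω) μ :=
  (h.aemeasurable_weight i).mul (h.identDistrib i).aemeasurable_fst

lemma weight_mul_copy_nonneg (h : IsSmoothingSolution c W Z' Z μ) :
    ∀ᵐ ω ∂μ, ∀ i ∈ Finset.univ, 0 ≤ W i ω * Z' i ω := by
  filter_upwards [ae_all_iff.mpr h.weight_nonneg, ae_all_iff.mpr h.copy_nonneg] with ω hW hZ' i _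
  exact mul_nonneg (hW i) (hZ' i)

lemma rpowMoment_sum (h : IsSmoothingSolution c W Z' Z μ) (hc : 0 ≤ c) :
    rpowMoment (fun ω => ∑ i, W i ω * Z' i ω) r μ
      = ENNReal.ofReal (c ^ r) * rpowMoment Z r μ := by
  rw [← rpowMoment_const_mul hc h.nonneg, rpowMoment_congr_ae h.mul_eq_sum]

lemma sum_rpowMoment_weight_mul_copy (h : IsSmoothingSolution c W Z' Z μ) :
    ∑ i, rpowMoment (fun ω => W i ω * Z' i ω) r μ
      = (∑ i, rpowMoment (W i) r μ) * rpowMoment Z r μ := by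
  rw [Finset.sum_mul]
  refine Finset.sum_congr rfl fun i _ => ?_
  rw [rpowMoment_mul_of_indepFun (h.aemeasurable_weight i) (h.identDistrib i).aemeasurable_fst
    (h.weight_nonneg i) (h.copy_nonneg i) (h.indepFun i),
    rpowMoment_congr_identDistrib (h.identDistrib i)]

lemma sum_rpowMoment_weight_le (h : IsSmoothingSolution c W Z' Z μ) (hc : 0 ≤ c) (hq : 1 ≤ q)
    (h0 : rpowMoment Z q μ ≠ 0) (hfin : rpowMoment Z q μ ≠ ∞) :
    ∑ i, rpowMoment (W i) q μ ≤ ENNReal.ofReal (c ^ q) := by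
  rw [← ENNReal.mul_le_mul_iff_left h0 hfin, ← h.sum_rpowMoment_weight_mul_copy,
    ← h.rpowMoment_sum hc]
  exact sum_rpowMoment_le_rpowMoment_sum (fun i _ => h.aemeasurable_weight_mul_copy i)
    h.weight_mul_copy_nonneg hq

lemma rpowMoment_weight_ne_top (h : IsSmoothingSolution c W Z' Z μ) (hc : 0 ≤ c) (hq : 1 ≤ q)
    (h0 : rpowMoment Z q μ ≠ 0) (hfin : rpowMoment Z q μ ≠ ∞) (i : ι) :
    rpowMoment (W i) q μ ≠ ∞ :=
  ENNReal.sum_ne_top.mp (ne_top_of_le_ne_top ENNReal.ofReal_ne_top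
    (h.sum_rpowMoment_weight_le hc hq h0 hfin)) i (Finset.mem_univ i)

lemma sum_rpowMoment_weight_eq_of_eq [Nonempty ι] [IsFiniteMeasure μ]
    (h : IsSmoothingSolution c W Z' Z μ) (hc : 0 ≤ c) (hq : 1 < q)
    (h0 : rpowMoment Z q μ ≠ 0) (hfin : rpowMoment Z q μ ≠ ∞)
    (heq : ∑ i, rpowMoment (W i) q μ = ENNReal.ofReal (c ^ q)) (hr : 0 < r) (hrq : r ≤ q) :
    ∑ i, rpowMoment (W i) r μ = ENNReal.ofReal (c ^ r) := by
  obtain ⟨i⟩ := ‹Nonempty ι›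
  have hr0 : rpowMoment Z r μ ≠ 0 := rpowMoment_ne_zero_of_ne_zero
    (h.identDistrib i).aemeasurable_snd h.nonneg (by positivity) h0
  have hrfin : rpowMoment Z r μ ≠ ∞ := rpowMoment_ne_top_of_le h.nonneg hr.le hrq hfin
  rw [← ENNReal.mul_left_inj hr0 hrfin, ← h.sum_rpowMoment_weight_mul_copy, ← h.rpowMoment_sum hc]
  refine sum_rpowMoment_eq_rpowMoment_sum_of_eq (fun i _ => h.aemeasurable_weight_mul_copy i)
    h.weight_mul_copy_nonneg hq ?_ ?_ hr.ne'
  · rw [h.rpowMoment_sum hc]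
    exact ENNReal.mul_ne_top ENNReal.ofReal_ne_top hfin
  · rw [h.sum_rpowMoment_weight_mul_copy, h.rpowMoment_sum hc, heq]

variable [Nontrivial ι]

lemma exponent_add_one_le (h : IsSmoothingSolution (Fintype.card ι) W Z' Z μ) (hq : 1 ≤ q)
    (h0 : rpowMoment Z q μ ≠ 0) (hfin : rpowMoment Z q μ ≠ ∞) {s : ℝ}
    (hs : ∀ i, rpowMoment (W i) q μ = ENNReal.ofReal ((Fintype.card ι : ℝ) ^ s)) :
    s + 1 ≤ q := by
  have hb : (1 : ℝ) < Fintype.card ι := by exact_mod_cast Fintype.one_lt_card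
  have hle := h.sum_rpowMoment_weight_le (Nat.cast_nonneg _) hq h0 hfin
  rw [sum_rpowMoment_of_forall_eq_card_rpow hs,
    ENNReal.ofReal_le_ofReal_iff (by positivity)] at hle
  exact (Real.rpow_le_rpow_left_iff hb).mp hle

lemma exponent_add_one_eq_of_eq [IsFiniteMeasure μ]
    (h : IsSmoothingSolution (Fintype.card ι) W Z' Z μ) (hq : 1 < q)
    (h0 : rpowMoment Z q μ ≠ 0) (hfin : rpowMoment Z q μ ≠ ∞) {s : ℝ}
    (hsq : ∀ i, rpowMoment (W i) q μ = ENNReal.ofReal ((Fintype.card ι : ℝ) ^ (q - 1)))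
    (hr : 0 < r) (hrq : r ≤ q)
    (hsr : ∀ i, rpowMoment (W i) r μ = ENNReal.ofReal ((Fintype.card ι : ℝ) ^ s)) :
    s + 1 = r := by
  have hb : (1 : ℝ) < Fintype.card ι := by exact_mod_cast Fintype.one_lt_card
  have hsumq : ∑ i, rpowMoment (W i) q μ = ENNReal.ofReal ((Fintype.card ι : ℝ) ^ q) := by
    rw [sum_rpowMoment_of_forall_eq_card_rpow hsq, sub_add_cancel]
  have hsumr := h.sum_rpowMoment_weight_eq_of_eq (Nat.cast_nonneg _) hq h0 hfin hsumq hr hrq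
  rwa [sum_rpowMoment_of_forall_eq_card_rpow hsr,
    ENNReal.ofReal_eq_ofReal_iff (by positivity) (by positivity),
    Real.rpow_right_inj (by positivity) hb.ne'] at hsumr

end IsSmoothingSolution

end SmoothingEquation

section StrictConvexity

variable {α : Type*} [MeasurableSpace α] {μ : Measure α}

lemma integral_lt_integral_of_ae_lt [NeZero μ] {f g : α → ℝ} (hf : Integrable f μ)
    (hg : Integrable g μ) (h : ∀ᵐ x ∂μ, f x < g x) : ∫ x, f x ∂μ < ∫ x, g x ∂μ := by
  have hpos : 0 < ∫ x, (g - f) x ∂μ := by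
    refine (integral_pos_iff_support_of_nonneg_ae
      (h.mono fun x hx => (sub_pos.mpr hx).le) (hg.sub hf)).mpr ?_
    refine pos_iff_ne_zero.mpr fun hzero => ?_
    obtain ⟨x, hlt, hsupp⟩ := (h.and (measure_eq_zero_iff_ae_notMem.mp hzero)).exists
    exact hsupp (sub_pos.mpr hlt).ne'
  rw [integral_sub' hg hf] at hpos
  exact sub_pos.mp hpos

lemma integral_strictConvexOn_of_integrand_ae [NeZero μ] {E : Type*} [AddCommMonoid E] [Module ℝ E]
    {f : α → E → ℝ} {s : Set E} (hs : Convex ℝ s) (hf : ∀ᵐ x ∂μ, StrictConvexOn ℝ s (f x))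
    (hint : ∀ a ∈ s, Integrable (f · a) μ) : StrictConvexOn ℝ s fun a => ∫ x, f x a ∂μ := by
  refine ⟨hs, fun a ha b hb hab p t hp ht hpt => ?_⟩
  have hia := (hint a ha).smul p
  have hib := (hint b hb).smul t
  calc ∫ x, f x (p • a + t • b) ∂μ
      < ∫ x, (p • f x a + t • f x b) ∂μ :=
        integral_lt_integral_of_ae_lt (hint _ (hs ha hb hp.le ht.le hpt)) (hia.add hib)
          (hf.mono fun x hx => hx.2 ha hb hab hp ht hpt)
    _ = p • ∫ x, f x a ∂μ + t • ∫ x, f x b ∂μ := by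
        rw [← integral_smul, ← integral_smul]
        exact integral_add hia hib

lemma strictConvexOn_exp_mul_const {x : ℝ} (hx : x ≠ 0) :
    StrictConvexOn ℝ Set.univ fun q : ℝ => Real.exp (q * x) := by
  refine ⟨convex_univ, fun a _ b _ hab p t hp ht hpt => ?_⟩
  have h := strictConvexOn_exp.2 (Set.mem_univ (a * x)) (Set.mem_univ (b * x))
    (mul_left_injective₀ hx |>.ne hab) hp ht hpt
  simpa only [smul_eq_mul, add_mul, mul_assoc] using h

lemma strictConvexOn_const_mul {E : Type*} [AddCommMonoid E] [Module ℝ E] {s : Set E} {f : E → ℝ}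
    {c : ℝ} (hc : 0 < c) (hf : StrictConvexOn ℝ s f) : StrictConvexOn ℝ s fun x => c * f x := by
  refine ⟨hf.1, fun a ha b hb hab p t hp ht hpt => ?_⟩
  have h := mul_lt_mul_of_pos_left (hf.2 ha hb hab hp ht hpt) hc
  simpa only [smul_eq_mul, mul_add, mul_left_comm] using h

lemma not_forall_mem_Icc_eq_of_strictConvexOn {s : Set ℝ} {f : ℝ → ℝ} (hf : StrictConvexOn ℝ s f)
    {a b : ℝ} (ha : a ∈ s) (hb : b ∈ s) (hab : a < b) (c : ℝ) : ¬ ∀ x ∈ Set.Icc a b, f x = c := by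
  intro hc
  have ha' : a ∈ Set.Icc a b := Set.left_mem_Icc.mpr hab.le
  have hb' : b ∈ Set.Icc a b := Set.right_mem_Icc.mpr hab.le
  have h := hf.2 ha hb hab.ne one_half_pos one_half_pos (add_halves 1)
  rw [hc _ (convex_Icc a b ha' hb' one_half_pos.le one_half_pos.le (add_halves 1)), hc _ ha',
    hc _ hb', ← add_smul, add_halves, one_smul] at h
  exact lt_irrefl c h

end StrictConvexity

section LevyExponent

variable {ν : Measure ℝ}

/-- The compensated integrand `e^{qx} − 1 − q x 1_{|x|≤1}` of the Lévy–Khintchine formula, with the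
space variable first so that convexity in `q` is that of `levyIntegrand x`. -/
noncomputable def levyIntegrand (x q : ℝ) : ℝ :=
  Real.exp (q * x) - 1 - q * (if |x| ≤ 1 then x else 0)

lemma strictConvexOn_levyIntegrand {x : ℝ} (hx : x ≠ 0) :
    StrictConvexOn ℝ Set.univ (levyIntegrand x) :=
  ((strictConvexOn_exp_mul_const hx).sub_concaveOn (concaveOn_const 1 convex_univ)).sub_concaveOn
    ((LinearMap.mulRight ℝ (if |x| ≤ 1 then x else 0)).concaveOn convex_univ)

lemma Inu_eq_integrableExpSet (ν : Measure ℝ) :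
    Inu ν = integrableExpSet id (ν.restrict {x | 1 ≤ |x|}) := by
  ext q
  have hm : Measurable fun x : ℝ => Real.exp (q * x) := by fun_prop
  simp only [Inu, integrableExpSet, Set.mem_ofPred_eq, id, Integrable,
    hm.aestronglyMeasurable, true_and,
    hasFiniteIntegral_iff_ofReal (ae_of_all _ fun x => (Real.exp_pos (q * x)).le)]

lemma convex_Inu (ν : Measure ℝ) : Convex ℝ (Inu ν) := by
  rw [Inu_eq_integrableExpSet]
  exact convex_integrableExpSet

lemma abs_exp_sub_one_sub_le_sq_mul_exp_abs (x : ℝ) :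
    |Real.exp x - 1 - x| ≤ x ^ 2 * Real.exp |x| := by
  have h := Complex.norm_exp_sub_sum_le_norm_mul_exp x 2
  have hsum : ∑ m ∈ Finset.range 2, (x : ℂ) ^ m / m.factorial = (1 + x : ℝ) := by
    simp [Finset.sum_range_succ]
  rw [hsum, ← Complex.ofReal_exp, ← Complex.ofReal_sub, Complex.norm_real, Complex.norm_real,
    Real.norm_eq_abs, Real.norm_eq_abs, sq_abs] at h
  rwa [sub_sub]

lemma abs_levyIntegrand_le (x q : ℝ) :
    |levyIntegrand x q| ≤ (q ^ 2 * Real.exp |q| + 1) * min 1 (x ^ 2)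
      + {x : ℝ | 1 ≤ |x|}.indicator (fun x => Real.exp (q * x)) x := by
  have hexp : 0 < Real.exp (q * x) := Real.exp_pos _
  rcases le_or_gt |x| 1 with hx | hx
  · have hind : 0 ≤ {x : ℝ | 1 ≤ |x|}.indicator (fun x => Real.exp (q * x)) x :=
      Set.indicator_nonneg (fun _ _ => (Real.exp_pos _).le) x
    have hle : |levyIntegrand x q| ≤ (q ^ 2 * Real.exp |q|) * x ^ 2 := by
      calc |levyIntegrand x q| = |Real.exp (q * x) - 1 - q * x| := by
            rw [levyIntegrand, if_pos hx]
        _ ≤ (q * x) ^ 2 * Real.exp |q * x| := abs_exp_sub_one_sub_le_sq_mul_exp_abs _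
        _ ≤ (q * x) ^ 2 * Real.exp |q| := by
            rw [abs_mul]
            gcongr
            exact mul_le_of_le_one_right (abs_nonneg q) hx
        _ = (q ^ 2 * Real.exp |q|) * x ^ 2 := by ring
    rw [min_eq_right ((sq_le_one_iff_abs_le_one x).mpr hx)]
    linarith [sq_nonneg x]
  · have hpos : 0 ≤ q ^ 2 * Real.exp |q| := by positivity
    rw [levyIntegrand, if_neg hx.not_ge, min_eq_left ((one_le_sq_iff_one_le_abs x).mpr hx.le),
      Set.indicator_of_mem (show x ∈ {x : ℝ | 1 ≤ |x|} from hx.le), abs_le]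
    constructor <;> linarith

lemma measurable_levyIntegrand (q : ℝ) : Measurable fun x => levyIntegrand x q := by
  have hcut : Measurable fun x : ℝ => if |x| ≤ 1 then x else 0 :=
    Measurable.ite (measurableSet_le (by fun_prop) measurable_const) measurable_id measurable_const
  unfold levyIntegrand
  fun_prop

lemma integrable_levyIntegrand (hν2 : ∫⁻ x, ENNReal.ofReal (min 1 (x ^ 2)) ∂ν < ⊤) {q : ℝ}
    (hq : q ∈ Inu ν) : Integrable (fun x => levyIntegrand x q) ν := by
  have hsmall : Integrable (fun x : ℝ => min 1 (x ^ 2)) ν := by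
    refine ⟨by fun_prop, ?_⟩
    rwa [hasFiniteIntegral_iff_ofReal (ae_of_all _ fun x => by positivity)]
  have hlarge : Integrable ({x : ℝ | 1 ≤ |x|}.indicator fun x => Real.exp (q * x)) ν := by
    rw [Inu_eq_integrableExpSet] at hq
    exact (integrable_indicator_iff (measurableSet_le measurable_const (by fun_prop))).mpr hq
  exact ((hsmall.const_mul _).add hlarge).mono' (measurable_levyIntegrand q).aestronglyMeasurable
    (ae_of_all _ fun x => abs_levyIntegrand_le x q)

lemma ae_strictConvexOn_levyIntegrand (hν0 : ν {0} = 0) :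
    ∀ᵐ x ∂ν, StrictConvexOn ℝ (Inu ν) (levyIntegrand x) := by
  filter_upwards [measure_eq_zero_iff_ae_notMem.mp hν0] with x hx
  exact (strictConvexOn_levyIntegrand hx).subset (Set.subset_univ _) (convex_Inu ν)

lemma strictConvexOn_psiT {σ : ℝ} (hν0 : ν {0} = 0)
    (hν2 : ∫⁻ x, ENNReal.ofReal (min 1 (x ^ 2)) ∂ν < ⊤) (hnz : σ ≠ 0 ∨ ν ≠ 0) :
    StrictConvexOn ℝ (Inu ν) (psiT σ ν) := by
  have hconv : Convex ℝ (Inu ν) := convex_Inu ν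
  have hstrict := ae_strictConvexOn_levyIntegrand hν0
  have hint : ∀ q ∈ Inu ν, Integrable (levyIntegrand · q) ν :=
    fun q hq => integrable_levyIntegrand hν2 hq
  have hdrift : ConvexOn ℝ (Inu ν) fun q => levyA σ ν * q :=
    (LinearMap.mulLeft ℝ (levyA σ ν)).convexOn hconv
  have hsq : StrictConvexOn ℝ (Inu ν) fun q : ℝ => q ^ 2 :=
    (even_two.strictConvexOn_pow two_ne_zero).subset (Set.subset_univ _) hconv
  rcases hnz with hσ | hν
  · have hgauss : StrictConvexOn ℝ (Inu ν) fun q => σ ^ 2 * q ^ 2 / 2 := by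
      simpa only [mul_div_right_comm] using strictConvexOn_const_mul (by positivity) hsq
    exact (hdrift.add_strictConvexOn hgauss).add_convexOn <|
      integral_convexOn_of_integrand_ae hconv (hstrict.mono fun _ hx => hx.convexOn) hint
  · have : NeZero ν := ⟨hν⟩
    have hgauss : ConvexOn ℝ (Inu ν) fun q => σ ^ 2 * q ^ 2 / 2 := by
      simpa only [mul_div_right_comm, smul_eq_mul] using
        hsq.convexOn.smul (c := σ ^ 2 / 2) (by positivity)
    exact (hdrift.add hgauss).add_strictConvexOn <|
      integral_strictConvexOn_of_integrand_ae hconv hstrict hint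

lemma strictConvexOn_phiF {σ : ℝ} (hν0 : ν {0} = 0)
    (hν2 : ∫⁻ x, ENNReal.ofReal (min 1 (x ^ 2)) ∂ν < ⊤) (hnz : σ ≠ 0 ∨ ν ≠ 0) :
    StrictConvexOn ℝ (Inu ν) (phiF σ ν) :=
  (strictConvexOn_psiT hν0 hν2 hnz).sub_concaveOn
    ((concaveOn_id (convex_Inu ν)).sub (convexOn_const 1 (convex_Inu ν)))

end LevyExponent

theorem stmt_5_general {Ω ι : Type*} [MeasurableSpace Ω] [Fintype ι] [Nontrivial ι]
    {P : Measure Ω} [IsFiniteMeasure P] {σ : ℝ} {ν : Measure ℝ} (hν0 : ν {0} = 0)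
    (hν2 : ∫⁻ x, ENNReal.ofReal (min 1 (x ^ 2)) ∂ν < ⊤) (hnz : σ ≠ 0 ∨ ν ≠ 0)
    (hIν : 1 ∈ Inu ν) {W Z' : ι → Ω → ℝ} {Z : Ω → ℝ}
    (hZ : IsSmoothingSolution (Fintype.card ι) W Z' Z P) {q : ℝ} (hq : 1 < q)
    (hWmom : ∀ i, ∀ r ∈ Set.Icc 1 q,
      (r ∈ Inu ν →
        rpowMoment (W i) r P = ENNReal.ofReal ((Fintype.card ι : ℝ) ^ psiT σ ν r)) ∧
      (r ∉ Inu ν → rpowMoment (W i) r P = ∞))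
    (hZq0 : rpowMoment Z q P ≠ 0) (hZq1 : rpowMoment Z q P ≠ ∞) :
    q ∈ Inu ν ∧ phiF σ ν q < 0 := by
  have hq_mem : q ∈ Set.Icc 1 q := Set.right_mem_Icc.mpr hq.le
  have hqI : q ∈ Inu ν := by
    by_contra hqI
    obtain ⟨i⟩ : Nonempty ι := inferInstance
    exact hZ.rpowMoment_weight_ne_top (Nat.cast_nonneg _) hq.le hZq0 hZq1 i
      ((hWmom i q hq_mem).2 hqI)
  have hIcc : Set.Icc 1 q ⊆ Inu ν := (convex_Inu ν).ordConnected.out hIν hqI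
  have hmom : ∀ r ∈ Set.Icc 1 q, ∀ i,
      rpowMoment (W i) r P = ENNReal.ofReal ((Fintype.card ι : ℝ) ^ psiT σ ν r) :=
    fun r hr i => (hWmom i r hr).1 (hIcc hr)
  have hle : phiF σ ν q ≤ 0 :=
    sub_nonpos.mpr (le_sub_iff_add_le.mpr
      (hZ.exponent_add_one_le hq.le hZq0 hZq1 (hmom q hq_mem)))
  refine ⟨hqI, hle.lt_of_ne fun hφ => ?_⟩
  have hψq : psiT σ ν q = q - 1 := sub_eq_zero.mp hφ
  refine not_forall_mem_Icc_eq_of_strictConvexOn (strictConvexOn_phiF hν0 hν2 hnz) hIν hqI hq 0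
    fun r hr => sub_eq_zero.mpr (eq_sub_of_add_eq ?_)
  exact hZ.exponent_add_one_eq_of_eq hq hZq0 hZq1 (hψq ▸ hmom q hq_mem) (by linarith [hr.1]) hr.2
    (hmom r hr)

/-- If `2Z = W₀Z₀ + W₁Z₁` a.s., with `Z, Z₀, Z₁` identically distributed with positive finite
mean, `W_i` with moments `E(W_i^q) = 2^{ψ̃(q)}` and independent of `Z_i`, and
`(W₀, Z₀)` and `(W₁, Z₁)` with the same joint law, then for `q > 1` with
`0 < E(Z^q) < ∞` one has `q ∈ I_ν` and `φ(q) < 0`. -/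
theorem stmt_5
    {Ω : Type*} [MeasurableSpace Ω] (P : Measure Ω) [IsProbabilityMeasure P]
    (σ : ℝ) (ν : Measure ℝ)
    (hν0 : ν {0} = 0)
    (hν2 : ∫⁻ x, ENNReal.ofReal (min 1 (x ^ 2)) ∂ν < ⊤)
    (hnz : σ ≠ 0 ∨ ν ≠ 0)
    (hIν : Set.Icc (0 : ℝ) 1 ⊆ Inu ν)
    (W Z' : Fin 2 → Ω → ℝ) (Z : Ω → ℝ)
    (hWm : ∀ i, Measurable (W i)) (hZ'm : ∀ i, Measurable (Z' i)) (hZm : Measurable Z)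
    (hW0 : ∀ i ω, 0 ≤ W i ω) (hZ'0 : ∀ i ω, 0 ≤ Z' i ω) (hZ0 : ∀ ω, 0 ≤ Z ω)
    (hZd : ∀ i, P.map (Z' i) = P.map Z)
    (hZint : Integrable Z P) (hZpos : 0 < ∫ ω, Z ω ∂P)
    (hWmom : ∀ i, ∀ q : ℝ, 0 ≤ q →
      (q ∈ Inu ν →
        ∫⁻ ω, ENNReal.ofReal (W i ω ^ q) ∂P = ENNReal.ofReal ((2 : ℝ) ^ psiT σ ν q)) ∧
      (q ∉ Inu ν → ∫⁻ ω, ENNReal.ofReal (W i ω ^ q) ∂P = ⊤))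
    (hInd : ∀ i, IndepFun (W i) (Z' i) P)
    (hEq : ∀ᵐ ω ∂P, 2 * Z ω = W 0 ω * Z' 0 ω + W 1 ω * Z' 1 ω)
    (hjoint : P.map (fun ω => (W 0 ω, Z' 0 ω)) = P.map (fun ω => (W 1 ω, Z' 1 ω)))
    (q : ℝ) (hq : 1 < q)
    (hZq0 : 0 < ∫⁻ ω, ENNReal.ofReal (Z ω ^ q) ∂P)
    (hZq1 : ∫⁻ ω, ENNReal.ofReal (Z ω ^ q) ∂P < ⊤) :
    q ∈ Inu ν ∧ phiF σ ν q < 0 := by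
  have hZsol : IsSmoothingSolution (Fintype.card (Fin 2)) W Z' Z P :=
    { aemeasurable_weight := fun i => (hWm i).aemeasurable
      weight_nonneg := fun i => ae_of_all _ (hW0 i)
      nonneg := ae_of_all _ hZ0
      identDistrib := fun i => ⟨(hZ'm i).aemeasurable, hZm.aemeasurable, hZd i⟩
      indepFun := hInd
      mul_eq_sum := by simpa using hEq }
  exact stmt_5_general hν0 hν2 hnz (hIν ⟨zero_le_one, le_rfl⟩) hZsol hq
    (fun i r hr => by simpa [rpowMoment] using hWmom i r (zero_le_one.trans hr.1)) hZq0.ne' hZq1.ne
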